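/- arXiv:2405.14250 — 4 statements merged into one kernel-verified Lean document; each statement's English description precedes it below -/
import Mathlib

section
/- Let d : ℕ, let Σ be a real symmetric positive semidefinite d×d matrix, let β : ℝ → ℝ be continuous with β s > 0 for all s, set B t = ∫_0^t β s ds and Σ_t = exp(−2·B t)·Σ + (1 − exp(−2·B t))·I, and fix T > 0 and t ∈ [0, T). Write C = B T − B (T−t), A = exp(−C) • (Σ_{T−t} * (Σ_T)⁻¹) and K = Σ_{T−t} − exp(−2·C) • (Σ_{T−t} * Σ_{T−t} * (Σ_T)⁻¹). Then for every d×d real symmetric matrix M with M * Σ = Σ * M: A * M * Aᵀ + K = Σ_{T−t} + exp(−2·C) • (Σ_{T−t} * Σ_{T−t} * (Σ_T)⁻¹ * (Σ_T)⁻¹ * (M − Σ_T)). -/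
open Matrix

/-!
Since `Σ_{T-t}`, `Σ_T` and `M` commute pairwise, the transition matrix `A` is symmetric and commutes
with `M`. Hence `A M Aᵀ = A² M`, while `K = Σ_{T-t} - A² Σ_T` because
`A² = e^{-2C} Σ_{T-t}² Σ_T⁻²`. The sum is `Σ_{T-t} + A² (M - Σ_T)`.
-/

section Commute

variable {n R : Type*} [Fintype n]

theorem commute_nonsing_inv_right [DecidableEq n] [CommRing R] {A B : Matrix n n R}
    (h : Commute A B) : Commute A B⁻¹ := by
  simpa only [Matrix.zpow_neg_one] using Matrix.Commute.zpow_right h (-1)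

theorem isSymm_mul_of_commute [NonUnitalCommSemiring R] {A B : Matrix n n R}
    (hA : A.IsSymm) (hB : B.IsSymm) (h : Commute A B) : (A * B).IsSymm := by
  rw [IsSymm, transpose_mul, hA.eq, hB.eq, h.eq]

theorem mul_mul_transpose_of_isSymm_of_commute [NonUnitalSemiring R] {A M : Matrix n n R}
    (hA : A.IsSymm) (h : Commute A M) : A * M * Aᵀ = A * A * M := by
  rw [hA.eq, mul_assoc, ← h.eq, mul_assoc]

end Commute

noncomputable section

variable {n : Type*} [DecidableEq n]

/-- The covariance `Σ_t` at time `t` of the forward Ornstein–Uhlenbeck process whose initial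
covariance is `S`. The noise schedule enters only through its primitive `B`, which is an arbitrary
function here. -/
def forwardCovariance (S : Matrix n n ℝ) (B : ℝ → ℝ) (t : ℝ) : Matrix n n ℝ :=
  Real.exp (-2 * B t) • S + (1 - Real.exp (-2 * B t)) • (1 : Matrix n n ℝ)

/-- The matrix `A` in the solution `y_t = A y₀ + ξ_t` of the backward SDE on `[0, T]`. The
inverse is `0` when `Σ_T` is singular. -/
def backwardTransition [Fintype n] (S : Matrix n n ℝ) (B : ℝ → ℝ) (T t : ℝ) : Matrix n n ℝ :=
  Real.exp (-(B T - B (T - t))) • (forwardCovariance S B (T - t) * (forwardCovariance S B T)⁻¹)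

/-- The covariance `K` of the noise `ξ_t` in the solution `y_t = A y₀ + ξ_t` of the backward SDE on
`[0, T]`. The inverse is `0` when `Σ_T` is singular. -/
def backwardNoiseCovariance [Fintype n] (S : Matrix n n ℝ) (B : ℝ → ℝ) (T t : ℝ) :
    Matrix n n ℝ :=
  forwardCovariance S B (T - t) - Real.exp (-2 * (B T - B (T - t))) •
    (forwardCovariance S B (T - t) * forwardCovariance S B (T - t) * (forwardCovariance S B T)⁻¹)

end

section Covariance

variable {n : Type*} [DecidableEq n] {S M : Matrix n n ℝ} {B : ℝ → ℝ} {T t : ℝ}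

theorem isSymm_forwardCovariance (hS : S.IsSymm) (B : ℝ → ℝ) (t : ℝ) :
    (forwardCovariance S B t).IsSymm :=
  (hS.smul _).add (isSymm_one.smul _)

theorem posDef_forwardCovariance (hS : S.PosSemidef) (hB : 0 < B t) :
    (forwardCovariance S B t).PosDef := by
  have hexp : Real.exp (-2 * B t) < 1 := Real.exp_lt_one_iff.2 (by linarith)
  exact PosDef.posSemidef_add (hS.smul (Real.exp_pos _).le) (PosDef.one.smul (sub_pos.2 hexp))

variable [Fintype n]

theorem commute_forwardCovariance (hM : Commute M S) (B : ℝ → ℝ) (t : ℝ) :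
    Commute M (forwardCovariance S B t) :=
  (hM.smul_right _).add_right ((Commute.one_right M).smul_right _)

theorem commute_forwardCovariance_forwardCovariance (S : Matrix n n ℝ) (B : ℝ → ℝ) (s t : ℝ) :
    Commute (forwardCovariance S B s) (forwardCovariance S B t) :=
  commute_forwardCovariance (commute_forwardCovariance (Commute.refl S) B s).symm B t

theorem isSymm_backwardTransition (hS : S.IsSymm) (B : ℝ → ℝ) (T t : ℝ) :
    (backwardTransition S B T t).IsSymm :=
  (isSymm_mul_of_commute (isSymm_forwardCovariance hS B _) (isSymm_forwardCovariance hS B T).inv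
    (commute_nonsing_inv_right (commute_forwardCovariance_forwardCovariance S B _ T))).smul _

theorem commute_backwardTransition (hM : Commute M S) (B : ℝ → ℝ) (T t : ℝ) :
    Commute M (backwardTransition S B T t) :=
  ((commute_forwardCovariance hM B _).mul_right
    (commute_nonsing_inv_right (commute_forwardCovariance hM B T))).smul_right _

theorem backwardTransition_mul_self (S : Matrix n n ℝ) (B : ℝ → ℝ) (T t : ℝ) :
    backwardTransition S B T t * backwardTransition S B T t =
      Real.exp (-2 * (B T - B (T - t))) •
        (forwardCovariance S B (T - t) * forwardCovariance S B (T - t) *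
          (forwardCovariance S B T)⁻¹ * (forwardCovariance S B T)⁻¹) := by
  have hcomm : Commute (forwardCovariance S B T)⁻¹ (forwardCovariance S B (T - t)) :=
    (commute_nonsing_inv_right (commute_forwardCovariance_forwardCovariance S B _ T)).symm
  have hexp : Real.exp (-(B T - B (T - t))) * Real.exp (-(B T - B (T - t))) =
      Real.exp (-2 * (B T - B (T - t))) := by
    rw [← Real.exp_add]
    ring_nf
  rw [backwardTransition, smul_mul_smul_comm, hexp, hcomm.mul_mul_mul_comm, ← mul_assoc]

theorem backwardNoiseCovariance_eq_sub (hT : IsUnit (forwardCovariance S B T)) (t : ℝ) :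
    backwardNoiseCovariance S B T t = forwardCovariance S B (T - t) -
      backwardTransition S B T t * backwardTransition S B T t * forwardCovariance S B T := by
  rw [backwardTransition_mul_self, smul_mul_assoc,
    nonsing_inv_mul_cancel_right _ _ ((isUnit_iff_isUnit_det _).1 hT), backwardNoiseCovariance]

theorem backward_sde_covariance_commuting_general (hS : S.IsSymm)
    (hT : IsUnit (forwardCovariance S B T)) (hM : Commute M S) (t : ℝ) :
    backwardTransition S B T t * M * (backwardTransition S B T t)ᵀ +
        backwardNoiseCovariance S B T t =
      forwardCovariance S B (T - t) + Real.exp (-2 * (B T - B (T - t))) •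
        (forwardCovariance S B (T - t) * forwardCovariance S B (T - t) *
          (forwardCovariance S B T)⁻¹ * (forwardCovariance S B T)⁻¹ *
          (M - forwardCovariance S B T)) := by
  rw [mul_mul_transpose_of_isSymm_of_commute (isSymm_backwardTransition hS B T t)
      (commute_backwardTransition hM B T t).symm,
    backwardNoiseCovariance_eq_sub hT, ← smul_mul_assoc, ← backwardTransition_mul_self, mul_sub]
  abel

end Covariance

/-- Equation (15) of Proposition 2 (commuting case): the covariance of the backward SDE
solution `y_t = A y₀ + ξ_t` satisfies
`A M Aᵀ + K = Σ_{T-t} + e^{-2C} Σ_{T-t}² Σ_T⁻² (M - Σ_T)` when `M` commutes with `Σ`. -/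
theorem backward_sde_covariance_commuting
    (d : ℕ) (S : Matrix (Fin d) (Fin d) ℝ)
    (hS_sym : S.IsSymm) (hS_psd : S.PosSemidef)
    (β : ℝ → ℝ) (hβ : Continuous β) (hβpos : ∀ s, 0 < β s)
    (B : ℝ → ℝ) (hB : ∀ t, B t = ∫ s in (0:ℝ)..t, β s)
    (St : ℝ → Matrix (Fin d) (Fin d) ℝ)
    (hSt : ∀ t, St t = Real.exp (-2 * B t) • S
      + (1 - Real.exp (-2 * B t)) • (1 : Matrix (Fin d) (Fin d) ℝ))
    (T : ℝ) (hT : 0 < T) (t : ℝ) (ht : t ∈ Set.Ico (0 : ℝ) T)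
    (C : ℝ) (hC : C = B T - B (T - t))
    (A K : Matrix (Fin d) (Fin d) ℝ)
    (hA : A = Real.exp (-C) • (St (T - t) * (St T)⁻¹))
    (hK : K = St (T - t)
      - Real.exp (-2 * C) • (St (T - t) * St (T - t) * (St T)⁻¹))
    (M : Matrix (Fin d) (Fin d) ℝ)
    (hM_sym : M.IsSymm) (hMcomm : M * S = S * M) :
    A * M * Aᵀ + K
      = St (T - t) + Real.exp (-2 * C) •
          (St (T - t) * St (T - t) * (St T)⁻¹ * (St T)⁻¹ * (M - St T)) := by
  have hBT : 0 < B T := hB T ▸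
    intervalIntegral.intervalIntegral_pos_of_pos (hβ.intervalIntegrable 0 T) hβpos hT
  obtain rfl : St = forwardCovariance S B := funext hSt
  subst hC hA hK
  exact backward_sde_covariance_commuting_general hS_sym
    (posDef_forwardCovariance hS_psd hBT).isUnit hMcomm t
end

section
/- Let d : ℕ, let Σ be a real symmetric positive semidefinite d×d matrix, let β : ℝ → ℝ be continuous with β s > 0 for all s, set B t = ∫_0^t β s ds and Σ_t = exp(−2·B t)·Σ + (1 − exp(−2·B t))·I, fix T > 0 and t ∈ [0, T], and define Σ̃_t = Σ_t + exp(−2·(B T − B t)) • (Σ_t * Σ_t * (Σ_T)⁻¹ * ((Σ_T)⁻¹ − I)) and Σ̂_t = (Σ_T)⁻¹ * Σ_t. Then the ranges of the linear endomorphisms of ℝ^d induced by the three matrices Σ_t, Σ̃_t and Σ̂_t coincide: LinearMap.range (Matrix.toLin' Σ_t) = LinearMap.range (Matrix.toLin' Σ̃_t) = LinearMap.range (Matrix.toLin' Σ̂_t). -/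
open Matrix

/-!
Write `A = Σ_t`, `Q = Σ_T` and `c = exp (-2 (B T - B t)) ∈ (0, 1]`. The forward flow is a semigroup,
so `Q = c A + (1 - c) I`; in particular `Q` commutes with `A`, and `Q⁻¹ A = A Q⁻¹` has the range of
`A` because `Q` is invertible. The same relation between `Q` and `A` gives
`A + c A² Q⁻¹ (Q⁻¹ - I) = A N Q⁻²` with `N = c A + (1 - c) Q`, and `N` is positive definite, hence
invertible, so the range is again that of `A`.
-/

section Algebra

variable {R : Type*} [CommRing R]

theorem add_smul_mul_sub_one_eq_mul {E : Type*} [Ring E] [Algebra R E] {c : R} {a q p : E}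
    (hq : q = c • a + (1 - c) • (1 : E)) (hqp : q * p = 1) :
    a + c • (a * a * p * (p - 1)) = a * ((c • a + (1 - c) • q) * p * p) := by
  have weight_eq : c • a + (1 - c) • q = q * q + c • (a * (1 - q)) := by
    simp only [hq, mul_add, add_mul, mul_sub, mul_one, one_mul, smul_mul_assoc, mul_smul_comm]
    module
  have sq_cancel : q * q * p * p = 1 := by rw [mul_assoc q q, hqp, mul_one, hqp]
  have one_sub_cancel : (1 - q) * p * p = p * (p - 1) := by
    rw [sub_mul, hqp, one_mul, sub_mul, one_mul, mul_sub, mul_one]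
  calc a + c • (a * a * p * (p - 1))
      = a * (q * q * p * p + c • (a * ((1 - q) * p * p))) := by
        rw [sq_cancel, one_sub_cancel, mul_add, mul_one, mul_smul_comm]
        simp only [mul_assoc]
    _ = a * ((c • a + (1 - c) • q) * p * p) := by
        rw [weight_eq]
        simp only [add_mul, smul_mul_assoc, mul_assoc]

variable {m n : Type*} [Fintype n] [DecidableEq n]

theorem range_toLin'_mul_of_isUnit (A : Matrix m n R) {U : Matrix n n R} (hU : IsUnit U) :
    LinearMap.range (toLin' (A * U)) = LinearMap.range (toLin' A) := by
  rw [toLin'_mul]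
  exact LinearMap.range_comp_of_range_eq_top _
    (LinearMap.range_eq_top.2 (mulVec_surjective_iff_isUnit.2 hU))

theorem range_toLin'_inv_mul_of_commute {A Q : Matrix n n R} (hAQ : Commute A Q)
    (hQ : IsUnit Q) :
    LinearMap.range (toLin' (Q⁻¹ * A)) = LinearMap.range (toLin' A) := by
  have inv_commute : Commute A Q⁻¹ := by simpa using Matrix.Commute.zpow_right hAQ (-1)
  rw [← inv_commute.eq]
  exact range_toLin'_mul_of_isUnit A (isUnit_nonsing_inv_iff.2 hQ)

end Algebra

section PosSemidef

open scoped ComplexOrder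

variable {𝕜 n : Type*} [RCLike 𝕜] [Fintype n] [DecidableEq n]

theorem range_toLin'_add_smul_mul_inv_sub_one {A Q : Matrix n n 𝕜} {c : ℝ} (hA : A.PosSemidef)
    (hQ : Q.PosDef) (hc₀ : 0 ≤ c) (hc₁ : c ≤ 1) (hQA : Q = c • A + (1 - c) • (1 : Matrix n n 𝕜)) :
    LinearMap.range (toLin' (A + c • (A * A * Q⁻¹ * (Q⁻¹ - 1)))) =
      LinearMap.range (toLin' A) := by
  have posDef_weight : (c • A + (1 - c) • Q).PosDef := by
    rcases hc₁.eq_or_lt with rfl | hc₁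
    · simpa [hQA] using hQ
    · exact .posSemidef_add (hA.smul hc₀) (hQ.smul (sub_pos.2 hc₁))
  have isUnit_inv : IsUnit Q⁻¹ := isUnit_nonsing_inv_iff.2 hQ.isUnit
  rw [add_smul_mul_sub_one_eq_mul hQA
    (mul_nonsing_inv Q ((isUnit_iff_isUnit_det Q).1 hQ.isUnit))]
  exact range_toLin'_mul_of_isUnit A ((posDef_weight.isUnit.mul isUnit_inv).mul isUnit_inv)

end PosSemidef

section Covariances

variable {𝕜 n : Type*} [RCLike 𝕜] [DecidableEq n]

/-- The covariance `Σ_t` of the forward process with initial covariance `S`, as a function of the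
integrated noise `b = B t` rather than of the time `t`. -/
noncomputable def forwardCov (S : Matrix n n 𝕜) (b : ℝ) : Matrix n n 𝕜 :=
  Real.exp (-2 * b) • S + (1 - Real.exp (-2 * b)) • (1 : Matrix n n 𝕜)

variable [Fintype n]

/-- The covariance `Σ̃_t` of the backward SDE started from the standard Gaussian, as a function of
the integrated noises `a = B t` and `b = B T`. -/
noncomputable def backwardSDECov (S : Matrix n n 𝕜) (a b : ℝ) : Matrix n n 𝕜 :=
  forwardCov S a + Real.exp (-2 * (b - a)) •
    (forwardCov S a * forwardCov S a * (forwardCov S b)⁻¹ * ((forwardCov S b)⁻¹ - 1))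

/-- The covariance `Σ̂_t` of the probability flow ODE started from the standard Gaussian, as a
function of the integrated noises `a = B t` and `b = B T`. -/
noncomputable def probabilityFlowCov (S : Matrix n n 𝕜) (a b : ℝ) : Matrix n n 𝕜 :=
  (forwardCov S b)⁻¹ * forwardCov S a

end Covariances

section Ranges

open scoped ComplexOrder

variable {𝕜 n : Type*} [RCLike 𝕜] [DecidableEq n] {S : Matrix n n 𝕜} {a b : ℝ}

theorem forwardCov_forwardCov (S : Matrix n n 𝕜) (a b : ℝ) :
    forwardCov (forwardCov S a) b = forwardCov S (a + b) := by
  have exp_add : Real.exp (-2 * (a + b)) = Real.exp (-2 * b) * Real.exp (-2 * a) := by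
    rw [← Real.exp_add]; ring_nf
  simp only [forwardCov, exp_add]
  module

theorem posDef_forwardCov (hS : S.PosSemidef) (hb : 0 < b) : (forwardCov S b).PosDef :=
  .posSemidef_add (hS.smul (Real.exp_nonneg _))
    (PosDef.one.smul (sub_pos.2 (Real.exp_lt_one_iff.2 (by linarith))))

theorem posSemidef_forwardCov (hS : S.PosSemidef) (hb : 0 ≤ b) :
    (forwardCov S b).PosSemidef := by
  rcases hb.eq_or_lt with rfl | hb
  · simpa [forwardCov] using hS
  · exact (posDef_forwardCov hS hb).posSemidef

variable [Fintype n]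

theorem commute_forwardCov (S : Matrix n n 𝕜) (a b : ℝ) :
    Commute (forwardCov S a) (forwardCov S b) := by
  have commute_left : Commute S (forwardCov S b) :=
    ((Commute.refl S).smul_right _).add_right ((Commute.one_right S).smul_right _)
  exact (commute_left.smul_left _).add_left ((Commute.one_left _).smul_left _)

theorem range_backwardSDECov (hS : S.PosSemidef) (ha : 0 ≤ a) (hab : a ≤ b) (hb : 0 < b) :
    LinearMap.range (toLin' (backwardSDECov S a b)) =
      LinearMap.range (toLin' (forwardCov S a)) := by
  have semigroup : forwardCov S b = forwardCov (forwardCov S a) (b - a) := by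
    rw [forwardCov_forwardCov, add_sub_cancel]
  exact range_toLin'_add_smul_mul_inv_sub_one (posSemidef_forwardCov hS ha)
    (posDef_forwardCov hS hb) (Real.exp_nonneg _) (Real.exp_le_one_iff.2 (by linarith)) semigroup

theorem range_probabilityFlowCov (hS : S.PosSemidef) (a : ℝ) (hb : 0 < b) :
    LinearMap.range (toLin' (probabilityFlowCov S a b)) =
      LinearMap.range (toLin' (forwardCov S a)) :=
  range_toLin'_inv_mul_of_commute (commute_forwardCov S a b) (posDef_forwardCov hS hb).isUnit

theorem generative_marginal_ranges_general (hS : S.PosSemidef) (ha : 0 ≤ a) (hab : a ≤ b)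
    (hb : 0 < b) :
    LinearMap.range (toLin' (forwardCov S a)) = LinearMap.range (toLin' (backwardSDECov S a b)) ∧
      LinearMap.range (toLin' (backwardSDECov S a b)) =
        LinearMap.range (toLin' (probabilityFlowCov S a b)) := by
  rw [range_backwardSDECov hS ha hab hb, range_probabilityFlowCov hS a hb]
  exact ⟨rfl, rfl⟩

end Ranges

/-- Proposition 4 (range equality): the covariances `Σ_t`, `Σ̃_t` and `Σ̂_t` of the exact
forward marginal, the generative backward SDE marginal and the generative probability flow
ODE marginal share the same range. -/
theorem generative_marginal_ranges
    (d : ℕ) (S : Matrix (Fin d) (Fin d) ℝ)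
    (hS_sym : S.IsSymm) (hS_psd : S.PosSemidef)
    (β : ℝ → ℝ) (hβ : Continuous β) (hβpos : ∀ s, 0 < β s)
    (B : ℝ → ℝ) (hB : ∀ t, B t = ∫ s in (0:ℝ)..t, β s)
    (St : ℝ → Matrix (Fin d) (Fin d) ℝ)
    (hSt : ∀ t, St t = Real.exp (-2 * B t) • S
      + (1 - Real.exp (-2 * B t)) • (1 : Matrix (Fin d) (Fin d) ℝ))
    (T : ℝ) (hT : 0 < T) (t : ℝ) (ht : t ∈ Set.Icc (0 : ℝ) T)
    (Stld Shat : Matrix (Fin d) (Fin d) ℝ)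
    (hStld : Stld = St t + Real.exp (-2 * (B T - B t)) •
      (St t * St t * (St T)⁻¹ * ((St T)⁻¹ - (1 : Matrix (Fin d) (Fin d) ℝ))))
    (hShat : Shat = (St T)⁻¹ * St t) :
    LinearMap.range (Matrix.toLin' (St t)) = LinearMap.range (Matrix.toLin' Stld)
      ∧ LinearMap.range (Matrix.toLin' Stld) = LinearMap.range (Matrix.toLin' Shat) := by
  have integrable : IntervalIntegrable β MeasureTheory.volume 0 T := hβ.intervalIntegrable 0 T
  have Bt_nonneg : 0 ≤ B t :=
    hB t ▸ intervalIntegral.integral_nonneg ht.1 fun s _ ↦ (hβpos s).le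
  have Bt_le_BT : B t ≤ B T := by
    rw [hB, hB]
    exact intervalIntegral.integral_mono_interval le_rfl ht.1 ht.2
      (.of_forall fun s ↦ (hβpos s).le) integrable
  have BT_pos : 0 < B T :=
    hB T ▸ intervalIntegral.intervalIntegral_pos_of_pos integrable hβpos hT
  obtain rfl : St = fun r ↦ forwardCov S (B r) := funext hSt
  subst hStld hShat
  exact generative_marginal_ranges_general hS_psd Bt_nonneg Bt_le_BT BT_pos
end

section
/- Let a, c, λ be real numbers with 0 < c, c < 1, c ≤ a ≤ 1 and λ ≥ 0. Set λ_t = a·λ + 1 − a, λ_T = c·λ + 1 − c, λ̃ = λ_t + (c/a)·λ_t²·(1/λ_T)·(1/λ_T − 1) and λ̂ = λ_t/λ_T. Then |Real.sqrt λ_t − Real.sqrt λ̃| ≤ |Real.sqrt λ_t − Real.sqrt λ̂|. -/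
/-!
The SDE eigenvalue lies on the segment from the exact eigenvalue `λ_t` to the ODE eigenvalue
`λ_t / λ_T`, at parameter `r = c * λ_t / (a * λ_T)`: this is an algebraic identity, and `r ∈ [0, 1]`
because `a * λ_T - c * λ_t = a - c ≥ 0`. A monotone map such as the square root preserves
betweenness, so the SDE gap is at most the ODE gap.
-/

open Set AffineMap

theorem abs_map_sub_map_le_of_mem_uIcc {α β : Type*} [LinearOrder α]
    [AddCommGroup β] [LinearOrder β] [IsOrderedAddMonoid β]
    {f : α → β} (hf : Monotone f) {x y z : α} (hz : z ∈ uIcc x y) :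
    |f x - f z| ≤ |f x - f y| := by
  have hfz : f z ∈ uIcc (f x) (f y) := hf.image_uIcc_subset (mem_image_of_mem f hz)
  simpa only [abs_sub_comm (f x)] using abs_sub_left_of_mem_uIcc hfz

/-- The eigenvalue of the forward marginal covariance `a Σ + (1 - a) I` for an eigenvalue `lam` of
the data covariance `Σ`, where `a = e^{-2B_t}`. -/
def forwardEigenvalue {R : Type*} [Ring R] (a lam : R) : R :=
  a * lam + 1 - a

section OrderedRing

variable {R : Type*} [CommRing R] [PartialOrder R] [IsOrderedRing R] {a c lam : R}

theorem forwardEigenvalue_nonneg (ha₀ : 0 ≤ a) (ha₁ : a ≤ 1) (hlam : 0 ≤ lam) :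
    0 ≤ forwardEigenvalue a lam := by
  rw [forwardEigenvalue, add_sub_assoc]
  exact add_nonneg (mul_nonneg ha₀ hlam) (sub_nonneg.2 ha₁)

theorem forwardEigenvalue_pos (ha₀ : 0 ≤ a) (ha₁ : a < 1) (hlam : 0 ≤ lam) :
    0 < forwardEigenvalue a lam := by
  rw [forwardEigenvalue, add_sub_assoc]
  exact add_pos_of_nonneg_of_pos (mul_nonneg ha₀ hlam) (sub_pos.2 ha₁)

theorem mul_forwardEigenvalue_le_mul_forwardEigenvalue (hca : c ≤ a) :
    c * forwardEigenvalue a lam ≤ a * forwardEigenvalue c lam := by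
  have h : a * forwardEigenvalue c lam - c * forwardEigenvalue a lam = a - c := by
    unfold forwardEigenvalue
    ring
  exact sub_nonneg.1 (h ▸ sub_nonneg.2 hca)

end OrderedRing

theorem forwardEigenvalue_ratio_mem_Icc {K : Type*} [Field K] [LinearOrder K]
    [IsStrictOrderedRing K] {a c lam : K}
    (hc : 0 < c) (hc1 : c < 1) (hca : c ≤ a) (ha : a ≤ 1) (hlam : 0 ≤ lam) :
    c * forwardEigenvalue a lam / (a * forwardEigenvalue c lam) ∈ Icc (0 : K) 1 := by
  have ha₀ : 0 < a := hc.trans_le hca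
  have hden : 0 < a * forwardEigenvalue c lam :=
    mul_pos ha₀ (forwardEigenvalue_pos hc.le hc1 hlam)
  have hnum : 0 ≤ c * forwardEigenvalue a lam :=
    mul_nonneg hc.le (forwardEigenvalue_nonneg ha₀.le ha hlam)
  exact ⟨div_nonneg hnum hden.le,
    (div_le_one hden).2 (mul_forwardEigenvalue_le_mul_forwardEigenvalue hca)⟩

theorem lineMap_div_eq_add_mul_one_div_sub_one {K : Type*} [Field K] (a c x y : K) :
    lineMap x (x / y) (c * x / (a * y)) = x + c / a * x ^ 2 * (1 / y) * (1 / y - 1) := by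
  rw [lineMap_apply_ring']
  ring

/-- Core eigenvalue-wise inequality of Proposition 4: the square-root eigenvalue gap of the
generative backward SDE marginal is no larger than that of the generative probability flow
ODE marginal, hence `W₂(p̃_t, p_t) ≤ W₂(p̂_t, p_t)`. -/
theorem sde_better_than_ode_eigenvalue
    (a c lam : ℝ) (hc : 0 < c) (hc1 : c < 1) (hca : c ≤ a) (ha : a ≤ 1) (hlam : 0 ≤ lam)
    (lamt lamT lamtld lamhat : ℝ)
    (hlamt : lamt = a * lam + 1 - a)
    (hlamT : lamT = c * lam + 1 - c)
    (hlamtld : lamtld = lamt + (c / a) * lamt ^ 2 * (1 / lamT) * (1 / lamT - 1))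
    (hlamhat : lamhat = lamt / lamT) :
    |Real.sqrt lamt - Real.sqrt lamtld| ≤ |Real.sqrt lamt - Real.sqrt lamhat| := by
  have hratio : c * lamt / (a * lamT) ∈ Icc (0 : ℝ) 1 := by
    rw [hlamt, hlamT]
    exact forwardEigenvalue_ratio_mem_Icc hc hc1 hca ha hlam
  have hbetween : lamtld ∈ uIcc lamt lamhat := by
    rw [hlamtld, hlamhat, ← lineMap_div_eq_add_mul_one_div_sub_one, ← segment_eq_uIcc]
    exact lineMap_mem_segment ℝ _ _ hratio
  exact abs_map_sub_map_le_of_mem_uIcc Real.sqrt_monotone hbetween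
end

section
/- Let M N : ℕ with M > 0 and N > 0, let G = ZMod M × ZMod N, and let t : Fin 3 → G → ℝ. Define the ADSN covariance matrix Σ : Matrix (Fin 3 × G) (Fin 3 × G) ℝ by Σ ((i,x),(j,y)) = ∑_{z ∈ G} t i (x − z) · t j (y − z), the character χ_ξ : G → ℂ, χ_ξ (x₁,x₂) = Complex.exp (2·π·Complex.I·((x₁.val·ξ₁.val : ℝ)/M + (x₂.val·ξ₂.val : ℝ)/N)) for ξ = (ξ₁,ξ₂) ∈ G, and the discrete Fourier coefficients t̂ i ξ = ∑_{x ∈ G} (t i x : ℂ) · conj (χ_ξ x). Then for every ξ ∈ G, the vectors u², u³ : Fin 3 × G → ℂ given by u² (i,x) = a_i · χ_ξ x with (a₀,a₁,a₂) = (−conj (t̂ 2 ξ), 0, conj (t̂ 0 ξ)) and u³ (i,x) = b_i · χ_ξ x with (b₀,b₁,b₂) = (0, −conj (t̂ 2 ξ), conj (t̂ 1 ξ)) satisfy (Σ.map (↑· : ℝ → ℂ)).mulVec u² = 0 and (Σ.map (↑· : ℝ → ℂ)).mulVec u³ = 0. -/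
open Matrix Complex

/-!
The covariance factors as `Σ = C Cᵀ`, where `C` is the matrix of the convolution `w ↦ (t_i ⋆ w)_i`.
If `ψ` is a character, then `Cᵀ` sends `(i, x) ↦ a_i ψ(x)` to `(∑ i, a_i ∑ x, t_i(x) ψ(x)) • ψ`.
Hence `Σ` kills this vector whenever `a` is orthogonal to the character sums
`τ_i = ∑ x, t_i(x) ψ(x)`, which for a real texton are the conjugates of the Fourier coefficients.
For two channels `k` and `l`, the vector with entries `-τ_l` at `k` and `τ_k` at `l` is orthogonal
to `τ`.
-/

section Covariance

variable {ι G R : Type*}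

/-- The matrix of the multichannel convolution `w ↦ (t i ⋆ w)_i`, which produces the spot noise with
texton `t` from white noise `w`. Its rows are indexed by pairs (channel, pixel). -/
def convMatrix [Sub G] (t : ι → G → R) : Matrix (ι × G) G R :=
  of fun p z ↦ t p.1 (p.2 - z)

/-- The covariance matrix of the spot noise with texton `t`. The transpose is not conjugated: a real
texton may be regarded as taking values in `ℂ` without changing the covariance. -/
def adsnCovariance [Fintype G] [Sub G] [CommSemiring R] (t : ι → G → R) :
    Matrix (ι × G) (ι × G) R :=
  convMatrix t * (convMatrix t)ᵀ

theorem adsnCovariance_apply [Fintype G] [Sub G] [CommSemiring R] (t : ι → G → R)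
    (i j : ι) (x y : G) :
    adsnCovariance t (i, x) (j, y) = ∑ z, t i (x - z) * t j (y - z) :=
  rfl

/-- The multichannel signal equal to `a i • ψ` in channel `i`; for a character `ψ` this is a Fourier
mode with amplitudes `a`. -/
def fourierMode [Mul R] (a : ι → R) (ψ : G → R) : ι × G → R :=
  fun p ↦ a p.1 * ψ p.2

/-- The sums of the channels of `t` against the character `ψ`. There is no conjugation on `ψ`, so
for a real texton this is the complex conjugate of the Fourier coefficient at `ψ`. -/
def charSum [AddMonoid G] [Fintype G] [CommSemiring R] (t : ι → G → R) (ψ : AddChar G R) (i : ι) :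
    R :=
  ∑ x, t i x * ψ x

theorem charSum_ofReal_eq_conj [AddMonoid G] [Fintype G] (t : ι → G → ℝ) (ψ : AddChar G ℂ)
    (i : ι) :
    charSum (fun i x ↦ (t i x : ℂ)) ψ i
      = starRingEnd ℂ (∑ x, (t i x : ℂ) * starRingEnd ℂ (ψ x)) := by
  simp only [charSum, map_sum, map_mul, conj_ofReal, conj_conj]

/-- For `k ≠ l`, the amplitudes `-τ l` in channel `k`, `τ k` in channel `l` and zero elsewhere, the
standard linear relation between the entries `τ k` and `τ l`. It vanishes for `k = l`. -/
def crossCoeff [DecidableEq ι] [AddGroup R] (τ : ι → R) (k l : ι) : ι → R :=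
  Pi.single l (τ k) - Pi.single k (τ l)

theorem crossCoeff_dotProduct_self [Fintype ι] [DecidableEq ι] [CommRing R] (τ : ι → R)
    (k l : ι) : crossCoeff τ k l ⬝ᵥ τ = 0 := by
  rw [crossCoeff, sub_dotProduct, single_dotProduct, single_dotProduct, mul_comm, sub_self]

theorem crossCoeff_zero_two [AddGroup R] (τ : Fin 3 → R) :
    crossCoeff τ 0 2 = ![-τ 2, 0, τ 0] := by
  ext i
  fin_cases i <;> simp [crossCoeff]

theorem crossCoeff_one_two [AddGroup R] (τ : Fin 3 → R) :
    crossCoeff τ 1 2 = ![0, -τ 2, τ 1] := by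
  ext i
  fin_cases i <;> simp [crossCoeff]

variable [AddGroup G] [Fintype G]

theorem sum_sub_mul_addChar [CommSemiring R] (f : G → R) (ψ : AddChar G R) (z : G) :
    ∑ y, f (y - z) * ψ y = (∑ x, f x * ψ x) * ψ z := by
  rw [← Equiv.sum_comp (Equiv.addRight z), Finset.sum_mul]
  simp only [Equiv.coe_addRight, add_sub_cancel_right, AddChar.map_add_eq_mul, mul_assoc]

theorem convMatrix_transpose_mulVec_fourierMode [Fintype ι] [CommSemiring R] (t : ι → G → R)
    (a : ι → R) (ψ : AddChar G R) :
    (convMatrix t)ᵀ *ᵥ fourierMode a ψ = (a ⬝ᵥ charSum t ψ) • ⇑ψ := by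
  ext z
  calc ∑ p : ι × G, t p.1 (p.2 - z) * (a p.1 * ψ p.2)
      = ∑ i, a i * ∑ y, t i (y - z) * ψ y := by
        simp only [Fintype.sum_prod_type, Finset.mul_sum, mul_left_comm]
    _ = (∑ i, a i * charSum t ψ i) * ψ z := by
        simp only [sum_sub_mul_addChar, charSum, Finset.sum_mul, mul_assoc]

theorem adsnCovariance_mulVec_fourierMode_eq_zero [Fintype ι] [CommSemiring R] {t : ι → G → R}
    {a : ι → R} {ψ : AddChar G R} (ha : a ⬝ᵥ charSum t ψ = 0) :
    adsnCovariance t *ᵥ fourierMode a ψ = 0 := by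
  rw [adsnCovariance, ← mulVec_mulVec, convMatrix_transpose_mulVec_fourierMode, ha, zero_smul,
    mulVec_zero]

theorem adsn_covariance_kernel_vectors_general [Fintype ι] [DecidableEq ι] [CommRing R]
    (t : ι → G → R) (ψ : AddChar G R) (k l : ι) :
    adsnCovariance t *ᵥ fourierMode (crossCoeff (charSum t ψ) k l) ψ = 0 :=
  adsnCovariance_mulVec_fourierMode_eq_zero (crossCoeff_dotProduct_self _ k l)

end Covariance

section TorusChar

theorem stdAddChar_mul_eq_exp {M : ℕ} [NeZero M] (k x : ZMod M) :
    ZMod.stdAddChar (k * x) = exp (2 * Real.pi * I * (((x.val * k.val : ℕ) : ℂ) / M)) := by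
  have natCast_val_mul : k * x = ((x.val * k.val : ℕ) : ℤ) := by
    push_cast
    rw [ZMod.natCast_zmod_val, ZMod.natCast_zmod_val, mul_comm]
  rw [natCast_val_mul, ZMod.stdAddChar_coe, Int.cast_natCast, mul_div_assoc]

variable {M N : ℕ} [NeZero M] [NeZero N]

/-- The character of frequency `ξ` on the discrete torus, as the product of the standard characters
of the two cyclic factors scaled by the coordinates of `ξ`. -/
noncomputable def torusChar (ξ : ZMod M × ZMod N) : AddChar (ZMod M × ZMod N) ℂ :=
  (ZMod.stdAddChar.mulShift ξ.1).compAddMonoidHom (AddMonoidHom.fst _ _) *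
    (ZMod.stdAddChar.mulShift ξ.2).compAddMonoidHom (AddMonoidHom.snd _ _)

theorem torusChar_apply (ξ x : ZMod M × ZMod N) :
    torusChar ξ x = exp (2 * Real.pi * I *
      ((((x.1.val * ξ.1.val : ℕ) : ℝ) / M + ((x.2.val * ξ.2.val : ℕ) : ℝ) / N : ℝ) : ℂ)) := by
  calc torusChar ξ x = ZMod.stdAddChar (ξ.1 * x.1) * ZMod.stdAddChar (ξ.2 * x.2) := rfl
    _ = _ := by
      rw [stdAddChar_mul_eq_exp, stdAddChar_mul_eq_exp, ← exp_add, ← mul_add]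
      push_cast
      rfl

end TorusChar

/-- Appendix F.2: for each frequency `ξ`, the two explicit vectors
`u² (i, x) = ![-(conj (t̂ 2 ξ)), 0, conj (t̂ 0 ξ)] i · χ_ξ x` and
`u³ (i, x) = ![0, -(conj (t̂ 2 ξ)), conj (t̂ 1 ξ)] i · χ_ξ x`
lie in the kernel of the (complexified) ADSN covariance matrix, so `0` is an eigenvalue
of multiplicity at least `2MN`. -/
theorem adsn_covariance_kernel_vectors
    (M N : ℕ) [NeZero M] [NeZero N] (hM : 0 < M) (hN : 0 < N)
    (t : Fin 3 → ZMod M × ZMod N → ℝ)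
    (S : Matrix (Fin 3 × (ZMod M × ZMod N)) (Fin 3 × (ZMod M × ZMod N)) ℝ)
    (hS : ∀ i j x y, S (i, x) (j, y) = ∑ z : ZMod M × ZMod N, t i (x - z) * t j (y - z))
    (χ : ZMod M × ZMod N → ZMod M × ZMod N → ℂ)
    (hχ : ∀ ξ x, χ ξ x = Complex.exp (2 * Real.pi * Complex.I *
      ((((x.1.val * ξ.1.val : ℕ) : ℝ) / M + ((x.2.val * ξ.2.val : ℕ) : ℝ) / N : ℝ) : ℂ)))
    (that : Fin 3 → ZMod M × ZMod N → ℂ)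
    (hthat : ∀ i ξ, that i ξ
      = ∑ x : ZMod M × ZMod N, (t i x : ℂ) * (starRingEnd ℂ) (χ ξ x))
    (ξ : ZMod M × ZMod N)
    (u₂ u₃ : Fin 3 × (ZMod M × ZMod N) → ℂ)
    (hu₂ : ∀ i x, u₂ (i, x)
      = ![-(starRingEnd ℂ) (that 2 ξ), 0, (starRingEnd ℂ) (that 0 ξ)] i * χ ξ x)
    (hu₃ : ∀ i x, u₃ (i, x)
      = ![0, -(starRingEnd ℂ) (that 2 ξ), (starRingEnd ℂ) (that 1 ξ)] i * χ ξ x) :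
    (S.map (fun r : ℝ => (r : ℂ))).mulVec u₂ = 0
      ∧ (S.map (fun r : ℝ => (r : ℂ))).mulVec u₃ = 0 := by
  let τ : Fin 3 → ℂ := charSum (fun i x ↦ (t i x : ℂ)) (torusChar ξ)
  have χ_eq : χ ξ = torusChar ξ := by
    ext x
    rw [hχ, torusChar_apply]
  have conj_that (i : Fin 3) : starRingEnd ℂ (that i ξ) = τ i := by
    rw [hthat, χ_eq, ← charSum_ofReal_eq_conj]
  have S_eq : S.map (fun r : ℝ => (r : ℂ)) = adsnCovariance fun i x ↦ (t i x : ℂ) := by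
    ext ⟨i, x⟩ ⟨j, y⟩
    simp only [map_apply, hS, adsnCovariance_apply, ofReal_sum, ofReal_mul]
  have u₂_eq : u₂ = fourierMode (crossCoeff τ 0 2) (torusChar ξ) := by
    ext ⟨i, x⟩
    rw [hu₂, conj_that, conj_that, χ_eq, crossCoeff_zero_two, fourierMode]
  have u₃_eq : u₃ = fourierMode (crossCoeff τ 1 2) (torusChar ξ) := by
    ext ⟨i, x⟩
    rw [hu₃, conj_that, conj_that, χ_eq, crossCoeff_one_two, fourierMode]
  rw [S_eq, u₂_eq, u₃_eq]
  exact ⟨adsn_covariance_kernel_vectors_general _ _ 0 2,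
    adsn_covariance_kernel_vectors_general _ _ 1 2⟩
end
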